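/- For smooth rapidly decaying divergence-free u : ℝ³ → ℝ³ and any multi-index α with |α| ≤ m, ∫_{ℝ³} (u · ∇ D^α u) · D^α u dx = 0; consequently the transport commutator estimate gives |∫ D^α(u·∇u) · D^α u dx| ≤ C ‖∇u‖_{L^∞} ‖∇u‖²_{H^{m−1}} after summing over 0 < |α| ≤ m. -/

import Mathlib

open MeasureTheory

/-- Partial derivative `∂ᵢ f` of a scalar function on `ℝ³`. -/
noncomputable def pd (i : Fin 3) (f : (Fin 3 → ℝ) → ℝ) : (Fin 3 → ℝ) → ℝ :=
  fun x => fderiv ℝ f x (Pi.single i 1)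

/-- Multi-index derivative `D^α` with `α = (a, b, c)`. -/
noncomputable def Dmulti (a b c : ℕ) (f : (Fin 3 → ℝ) → ℝ) : (Fin 3 → ℝ) → ℝ :=
  (pd 0)^[a] ((pd 1)^[b] ((pd 2)^[c] f))

/-- Squared Sobolev `H^m` norm. -/
noncomputable def sobSq (m : ℕ) (f : (Fin 3 → ℝ) → ℝ) : ℝ :=
  ∑ k ∈ Finset.range (m + 1), ∫ x : Fin 3 → ℝ, ‖iteratedFDeriv ℝ k f x‖ ^ 2

/-- `L^∞` norm of the gradient of a vector field. -/
noncomputable def gradLinfVec (u : (Fin 3 → ℝ) → (Fin 3 → ℝ)) : ℝ :=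
  (eLpNorm (fun x => ‖fderiv ℝ u x‖) ⊤ volume).toReal

/-- `H^{m-1}` norm of the gradient of a vector field (i.e. `‖∇u‖_{H^{m-1}}`). -/
noncomputable def gradSob (m : ℕ) (u : (Fin 3 → ℝ) → (Fin 3 → ℝ)) : ℝ :=
  Real.sqrt (∑ i : Fin 3, ∑ j : Fin 3, sobSq (m - 1) (pd j (fun y => u y i)))

/-- Multi-indices `α ∈ ℕ³` with `0 < |α| ≤ m`. -/
def idxSetPos (m : ℕ) : Finset (ℕ × ℕ × ℕ) :=
  (Finset.range (m + 1) ×ˢ Finset.range (m + 1) ×ˢ Finset.range (m + 1)).filter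
    (fun p => 0 < p.1 + p.2.1 + p.2.2 ∧ p.1 + p.2.1 + p.2.2 ≤ m)

open scoped SchwartzMap LineDeriv ENNReal

theorem hasDerivAt_abs_rpow_mul_self {r : ℝ} (hr : 0 < r) (t : ℝ) :
    HasDerivAt (fun s : ℝ => |s| ^ r * s) ((r + 1) * |t| ^ r) t := by
  rcases eq_or_ne t 0 with rfl | ht
  · rw [hasDerivAt_iff_tendsto_slope]
    have h : Filter.Tendsto (fun s : ℝ => |s| ^ r) (nhdsWithin 0 {0}ᶜ) (nhds (|(0 : ℝ)| ^ r)) :=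
      ((continuous_abs.rpow_const fun _ => Or.inr hr.le).tendsto 0).mono_left nhdsWithin_le_nhds
    rw [abs_zero, Real.zero_rpow hr.ne'] at h
    rw [abs_zero, Real.zero_rpow hr.ne', mul_zero]
    refine h.congr' ?_
    filter_upwards [self_mem_nhdsWithin] with s hs
    have hs : s ≠ 0 := hs
    simp [slope_def_field, hs]
  · have h := ((hasDerivAt_abs ht).rpow_const (p := r) (Or.inl (abs_ne_zero.2 ht))).mul
      (hasDerivAt_id t)
    refine h.congr_deriv ?_
    have h1 : |t| ^ r = |t| ^ (r - 1) * |t| := by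
      rw [← Real.rpow_add_one (abs_ne_zero.2 ht)]; congr 1; ring
    have h2 : (SignType.sign t : ℝ) * t = |t| := by
      rw [sign_mul_self]
    simp only [id, mul_one]
    rw [h1, ← h2]
    ring

/-- The Hölder inequality for products of real functions. -/
theorem eLpNorm_mul_le_of_inv_add_inv {α : Type*} [MeasurableSpace α] {μ : Measure α} {f g : α → ℝ}
    (hf : AEStronglyMeasurable f μ) (hg : AEStronglyMeasurable g μ) {p q r : ℝ≥0∞}
    (hpqr : p⁻¹ + q⁻¹ = r⁻¹) :
    eLpNorm (fun x => f x * g x) r μ ≤ eLpNorm f p μ * eLpNorm g q μ := by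
  have : p.HolderTriple q r := ⟨hpqr⟩
  simpa using eLpNorm_le_eLpNorm_mul_eLpNorm_of_nnnorm (p := p) (q := q) (r := r) hf hg
    (fun a b : ℝ => a * b) 1 (Filter.Eventually.of_forall fun x => by simp [nnnorm_mul])

theorem exists_abs_rpow_le {E : Type*} [NormedAddCommGroup E] [NormedSpace ℝ E] (f : 𝓢(E, ℝ))
    {r : ℝ} (hr : 0 < r) : ∃ C : ℝ, ∀ x, |f x| ^ r ≤ C := by
  obtain ⟨C, hC, h⟩ := f.decay 0 0
  refine ⟨C ^ r, fun x => Real.rpow_le_rpow (abs_nonneg _) ?_ hr.le⟩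
  simpa using h x

section Interpolation

variable {E : Type*} [NormedAddCommGroup E] [NormedSpace ℝ E] [FiniteDimensional ℝ E]
  [MeasurableSpace E] [BorelSpace E] {μ : Measure E} [μ.IsAddHaarMeasure]

theorem integral_abs_lineDeriv_rpow (f : 𝓢(E, ℝ)) (v : E) {r : ℝ} (hr : 0 < r) :
    ∫ x, |∂_{v} f x| ^ (r + 2) ∂μ =
      -∫ x, (r + 1) * (|∂_{v} f x| ^ r * (∂_{v} (∂_{v} f) x * f x)) ∂μ := by
  set g := ∂_{v} f with hg
  have hcont : Continuous fun x => |g x| ^ r :=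
    g.continuous.abs.rpow_const fun _ => Or.inr hr.le
  obtain ⟨C, hC⟩ := exists_abs_rpow_le g hr
  have hint : ∀ h : 𝓢(E, ℝ), Integrable (fun x => |g x| ^ r * h x) μ := fun h =>
    h.integrable.bdd_mul hcont.aestronglyMeasurable (c := C) (Filter.Eventually.of_forall fun x => by
      rw [Real.norm_eq_abs, abs_of_nonneg (by positivity)]; exact hC x)
  have hD : ∀ x, HasFDerivAt (fun x => |g x| ^ r * g x) (((r + 1) * |g x| ^ r) • fderiv ℝ g x) x :=
    fun x => (hasDerivAt_abs_rpow_mul_self hr (g x)).comp_hasFDerivAt x (g.hasFDerivAt x)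
  have key := integral_mul_fderiv_eq_neg_fderiv_mul_of_integrable (μ := μ) (v := v)
    (f := fun x => |g x| ^ r * g x) (g := f) ?_ ?_ ?_
    (fun x _ => (hD x).differentiableAt) (fun x _ => (f.hasFDerivAt x).differentiableAt)
  · convert key using 1
    · refine integral_congr_ae (Filter.Eventually.of_forall fun x => ?_)
      have : fderiv ℝ f x v = g x := (SchwartzMap.lineDerivOp_apply_eq_fderiv v f x).symm
      simp only [this]
      rw [Real.rpow_add' (abs_nonneg _) (by positivity), Real.rpow_two, sq_abs]
      ring
    · congr 1
      refine integral_congr_ae (Filter.Eventually.of_forall fun x => ?_)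
      simp only [(hD x).fderiv, smul_apply, smul_eq_mul,
        SchwartzMap.lineDerivOp_apply_eq_fderiv v g x]
      ring
  · refine (((hint (SchwartzMap.pairing (ContinuousLinearMap.mul ℝ ℝ) (∂_{v} g) f)).const_mul
      (r + 1)).congr (Filter.Eventually.of_forall fun x => ?_))
    simp only [(hD x).fderiv, smul_apply, smul_eq_mul,
        SchwartzMap.lineDerivOp_apply_eq_fderiv v g x, SchwartzMap.pairing_apply_apply,
        ContinuousLinearMap.mul_apply']
    ring
  · refine ((hint (SchwartzMap.pairing (ContinuousLinearMap.mul ℝ ℝ) g g)).congr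
      (Filter.Eventually.of_forall fun x => ?_))
    have : fderiv ℝ f x v = g x := (SchwartzMap.lineDerivOp_apply_eq_fderiv v f x).symm
    simp only [this, SchwartzMap.pairing_apply_apply, ContinuousLinearMap.mul_apply']
    ring
  · refine ((hint (SchwartzMap.pairing (ContinuousLinearMap.mul ℝ ℝ) g f)).congr
      (Filter.Eventually.of_forall fun x => ?_))
    simp only [SchwartzMap.pairing_apply_apply, ContinuousLinearMap.mul_apply']
    ring

theorem lintegral_enorm_lineDeriv_rpow_le (f : 𝓢(E, ℝ)) (v : E) {r : ℝ} (hr : 0 < r) :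
    ∫⁻ x, ‖∂_{v} f x‖ₑ ^ (r + 2) ∂μ ≤ ENNReal.ofReal (r + 1) *
      ∫⁻ x, ‖f x * ∂_{v} (∂_{v} f) x‖ₑ * ‖∂_{v} f x‖ₑ ^ r ∂μ := by
  have h1 : ∫⁻ x, ‖∂_{v} f x‖ₑ ^ (r + 2) ∂μ = ENNReal.ofReal (∫ x, |∂_{v} f x| ^ (r + 2) ∂μ) := by
    rw [ofReal_integral_eq_lintegral_ofReal]
    · refine lintegral_congr fun x => ?_
      rw [← ENNReal.ofReal_rpow_of_nonneg (abs_nonneg _) (by positivity), Real.enorm_eq_ofReal_abs]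
    · have h := ((∂_{v} f).memLp (ENNReal.ofReal (r + 2)) μ).integrable_norm_rpow
        (by simp; linarith) (by simp)
      rwa [ENNReal.toReal_ofReal (by positivity)] at h
    · exact Filter.Eventually.of_forall fun x => by positivity
  rw [h1, integral_abs_lineDeriv_rpow f v hr]
  calc _ ≤ ENNReal.ofReal ‖∫ x, (r + 1) * (|∂_{v} f x| ^ r * (∂_{v} (∂_{v} f) x * f x)) ∂μ‖ :=
        ENNReal.ofReal_le_ofReal (neg_le_abs _)
    _ ≤ ∫⁻ x, ‖(r + 1) * (|∂_{v} f x| ^ r * (∂_{v} (∂_{v} f) x * f x))‖ₑ ∂μ := by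
        rw [ofReal_norm]; exact enorm_integral_le_lintegral_enorm _
    _ = _ := by
        rw [← lintegral_const_mul' _ _ ENNReal.ofReal_ne_top]
        refine lintegral_congr fun x => ?_
        rw [enorm_mul, enorm_mul, mul_comm (f x), mul_comm (‖|∂_{v} f x| ^ r‖ₑ),
          Real.enorm_eq_ofReal (by positivity : 0 ≤ r + 1),
          Real.enorm_rpow_of_nonneg (abs_nonneg _) hr.le, Real.enorm_abs]

/-- The Gagliardo–Nirenberg interpolation inequality between orders zero, one and two. -/
theorem eLpNorm_lineDeriv_sq_le {f g h : 𝓢(E, ℝ)} {v : E} (hg : ∂_{v} f = g) (hh : ∂_{v} g = h)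
    {q : ℝ} (hq : 2 < q) {p₁ p₂ : ℝ≥0∞}
    (hp : p₁⁻¹ + p₂⁻¹ = (ENNReal.ofReal (q / 2))⁻¹) :
    eLpNorm g (ENNReal.ofReal q) μ ^ 2 ≤
      ENNReal.ofReal (q - 1) * (eLpNorm f p₁ μ * eLpNorm h p₂ μ) := by
  obtain ⟨r, hr, rfl⟩ : ∃ r : ℝ, 0 < r ∧ q = r + 2 := ⟨q - 2, by linarith, by ring⟩
  have hint := lintegral_enorm_lineDeriv_rpow_le (μ := μ) f v hr
  rw [hg, hh] at hint
  set X := eLpNorm g (ENNReal.ofReal (r + 2)) μ with hX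
  have hXt : X ≠ ⊤ := (g.eLpNorm_lt_top _ μ).ne
  have hXi : X = (∫⁻ x, ‖g x‖ₑ ^ (r + 2) ∂μ) ^ (1 / (r + 2)) := by
    rw [hX, eLpNorm_eq_lintegral_rpow_enorm_toReal (by simp; linarith) (by simp),
      ENNReal.toReal_ofReal (by positivity)]
  have hXq : ∫⁻ x, ‖g x‖ₑ ^ (r + 2) ∂μ = X ^ (r + 2) := by
    rw [hXi, ← ENNReal.rpow_mul, one_div_mul_cancel (by positivity), ENNReal.rpow_one]
  have hconj : ((r + 2) / 2).HolderConjugate ((r + 2) / r) := by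
    rw [Real.holderConjugate_iff]
    constructor
    · linarith
    · field_simp; ring
  have hold := ENNReal.lintegral_mul_le_Lp_mul_Lq μ hconj
    (f := fun x => ‖f x * h x‖ₑ) (g := fun x => ‖g x‖ₑ ^ r)
    (f.continuous.mul h.continuous).enorm.measurable.aemeasurable
    (g.continuous.enorm.measurable.pow_const r).aemeasurable
  have e1 : (∫⁻ x, ‖f x * h x‖ₑ ^ ((r + 2) / 2) ∂μ) ^ (1 / ((r + 2) / 2)) =
      eLpNorm (fun x => f x * h x) (ENNReal.ofReal ((r + 2) / 2)) μ := by
    rw [eLpNorm_eq_lintegral_rpow_enorm_toReal (by simp; linarith) (by simp),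
      ENNReal.toReal_ofReal (by positivity)]
  have e2 : (∫⁻ x, (‖g x‖ₑ ^ r) ^ ((r + 2) / r) ∂μ) ^ (1 / ((r + 2) / r)) = X ^ r := by
    have : ∀ x, (‖g x‖ₑ ^ r) ^ ((r + 2) / r) = ‖g x‖ₑ ^ (r + 2) := fun x => by
      rw [← ENNReal.rpow_mul, mul_div_cancel₀ _ hr.ne']
    simp_rw [this]
    rw [hXq, ← ENNReal.rpow_mul]
    congr 1; field_simp
  have e3 : eLpNorm (fun x => f x * h x) (ENNReal.ofReal ((r + 2) / 2)) μ ≤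
      eLpNorm f p₁ μ * eLpNorm h p₂ μ := by
    exact eLpNorm_mul_le_of_inv_add_inv f.continuous.aestronglyMeasurable
      h.continuous.aestronglyMeasurable hp
  have main : X ^ 2 * X ^ r ≤ ENNReal.ofReal (r + 2 - 1) *
      (eLpNorm f p₁ μ * eLpNorm h p₂ μ) * X ^ r := by
    have : X ^ 2 * X ^ r = ∫⁻ x, ‖g x‖ₑ ^ (r + 2) ∂μ := by
      rw [hXq, ENNReal.rpow_add_of_nonneg _ _ hr.le zero_le_two, ENNReal.rpow_two, mul_comm]
    rw [this, show r + 2 - 1 = r + 1 by ring, mul_assoc]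
    refine hint.trans ?_
    gcongr
    refine hold.trans ?_
    rw [e1, e2]
    gcongr
  rcases eq_or_ne X 0 with h0 | h0
  · simp [h0]
  · exact (ENNReal.mul_le_mul_iff_left (by simp [ENNReal.rpow_eq_zero_iff, h0, hXt])
      (ENNReal.rpow_ne_top_of_nonneg hr.le hXt)).1 main

end Interpolation

/-- A log-convex sequence satisfies the product inequality at the endpoints. -/
theorem mul_le_mul_of_sq_le {n : ℕ} {A : ℕ → ℝ} (hA : ∀ j, 0 ≤ A j)
    (h : ∀ j, j + 2 ≤ n → A (j + 1) ^ 2 ≤ A j * A (j + 2)) :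
    ∀ k l, k + l = n → A k * A l ≤ A 0 * A n := by
  have step : ∀ d j, j + d + 2 ≤ n → A (j + 1) * A (j + d + 1) ≤ A j * A (j + d + 2) := by
    intro d
    induction d with
    | zero => intro j hj; have := h j hj; simpa [sq] using this
    | succ d ih =>
      intro j hj
      have h1 := ih j (by omega)
      have h2 := h (j + d + 1) (by omega)
      have e : j + (d + 1) + 1 = j + d + 2 := by ring
      have e₂ : j + (d + 1) + 2 = j + d + 3 := by ring
      have e₃ : j + d + 1 + 1 = j + d + 2 := by ring
      have e₄ : j + d + 1 + 2 = j + d + 3 := by ring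
      rw [e, e₂]
      rw [e₃, e₄] at h2
      rcases (hA (j + d + 2)).eq_or_lt with h0 | hpos
      · rw [← h0, mul_zero]; exact mul_nonneg (hA _) (hA _)
      rcases (hA (j + d + 1)).eq_or_lt with h0' | hpos'
      · rw [← h0'] at h2; nlinarith
      have h3 := mul_le_mul h1 h2 (sq_nonneg _) (mul_nonneg (hA _) (hA _))
      have h4 : 0 < A (j + d + 1) * A (j + d + 2) := mul_pos hpos' hpos
      refine le_of_mul_le_mul_right ?_ h4
      nlinarith
  have main : ∀ k l, k ≤ l → k + l = n → A k * A l ≤ A 0 * A n := by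
    intro k
    induction k with
    | zero => intro l _ hl; simp only [zero_add] at hl; rw [hl]
    | succ k ih =>
      intro l hkl hl
      have h1 := ih (l + 1) (by omega) (by omega)
      have h2 := step (l - k - 1) k (by omega)
      rw [show k + (l - k - 1) + 1 = l by omega, show k + (l - k - 1) + 2 = l + 1 by omega] at h2
      exact h2.trans h1
  intro k l hkl
  rcases le_total k l with hle | hle
  · exact main k l hle hkl
  · rw [mul_comm]; exact main l k hle (by omega)

/-- Endpoint product inequality for a sequence that is log-convex up to a constant factor. -/
theorem mul_le_pow_mul_of_sq_le {n : ℕ} {C : ℝ} (hC : 1 ≤ C) {A : ℕ → ℝ} (hA : ∀ j, 0 ≤ A j)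
    (h : ∀ j, j + 2 ≤ n → A (j + 1) ^ 2 ≤ C * (A j * A (j + 2))) {k l : ℕ} (hkl : k + l = n) :
    A k * A l ≤ C ^ (k * l) * (A 0 * A n) := by
  have hC0 : 0 < C := by linarith
  set s := Real.sqrt C with hs
  have hs0 : 0 < s := Real.sqrt_pos.2 hC0
  have hsC : s ^ 2 = C := Real.sq_sqrt hC0.le
  have key := mul_le_mul_of_sq_le (n := n) (A := fun j => A j / s ^ (j * (n - j)))
    (fun j => div_nonneg (hA j) (by positivity)) (fun j hj => ?_) k l hkl
  · obtain rfl : n = k + l := hkl.symm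
    simp only [Nat.add_sub_cancel_left, Nat.add_sub_cancel, zero_mul, pow_zero, div_one,
      Nat.sub_self, mul_zero] at key
    rw [div_mul_div_comm, div_le_iff₀ (by positivity), mul_comm l k, ← sq, pow_right_comm, hsC] at key
    linarith
  · obtain ⟨d, rfl⟩ := Nat.exists_eq_add_of_le hj
    have e1 : j + 2 + d - (j + 1) = d + 1 := by omega
    have e2 : j + 2 + d - j = d + 2 := by omega
    have e3 : j + 2 + d - (j + 2) = d := by omega
    simp only [e1, e2, e3]
    rw [div_mul_div_comm, div_pow, div_le_div_iff₀ (by positivity) (by positivity)]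
    have h1 := h j hj
    have h2 : (s ^ ((j + 1) * (d + 1))) ^ 2 = C * (s ^ (j * (d + 2)) * s ^ ((j + 2) * d)) := by
      rw [← hsC, ← pow_mul, ← pow_add, ← pow_add]; congr 1; ring
    rw [h2]
    have h3 : 0 ≤ s ^ (j * (d + 2)) * s ^ ((j + 2) * d) := by positivity
    nlinarith [mul_le_mul_of_nonneg_right h1 h3]

theorem iSup_ne_top_of_finite {ι : Type*} [Finite ι] {f : ι → ℝ≥0∞} (h : ∀ i, f i ≠ ⊤) :
    ⨆ i, f i ≠ ⊤ := by
  cases isEmpty_or_nonempty ι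
  · simp
  · obtain ⟨i, hi⟩ := exists_eq_ciSup_of_finite (f := f)
    exact hi ▸ h i

section Words

variable {E κ ι : Type*} [NormedAddCommGroup E] [NormedSpace ℝ E]

/-- The iterated line derivative along the directions `v i`, with `i` running through a word. -/
noncomputable def lineDerivWord (v : κ → E) (w : List κ) (f : 𝓢(E, ℝ)) : 𝓢(E, ℝ) :=
  w.foldr (fun i g => ∂_{v i} g) f

theorem lineDerivWord_nil (v : κ → E) (f : 𝓢(E, ℝ)) : lineDerivWord v [] f = f := rfl

theorem lineDerivWord_cons (v : κ → E) (i : κ) (w : List κ) (f : 𝓢(E, ℝ)) :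
    lineDerivWord v (i :: w) f = ∂_{v i} (lineDerivWord v w f) := rfl

theorem lineDerivWord_apply (v : κ → E) (w : List κ) (f : 𝓢(E, ℝ)) (x : E) :
    lineDerivWord v w f x = iteratedFDeriv ℝ w.length f x (fun i => v (w.get i)) := by
  rw [← SchwartzMap.iteratedLineDerivOp_eq_iteratedFDeriv]
  congr 1
  induction w with
  | nil => rfl
  | cons i w ih => rw [lineDerivWord_cons, ih]; rfl

theorem lineDerivOp_comm (f : 𝓢(E, ℝ)) (a b : E) : ∂_{a} (∂_{b} f) = ∂_{b} (∂_{a} f) := by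
  have hd : ∀ c d : E, ∀ x, ∂_{c} (∂_{d} f) x = fderiv ℝ (fderiv ℝ f) x c d := fun c d x => by
    rw [SchwartzMap.lineDerivOp_apply_eq_fderiv]
    have h1 : (∂_{d} f : 𝓢(E, ℝ)) = fun y => fderiv ℝ f y d :=
      funext fun y => SchwartzMap.lineDerivOp_apply_eq_fderiv d f y
    have h2 : DifferentiableAt ℝ (fderiv ℝ f) x :=
      ((SchwartzMap.fderivCLM ℝ E ℝ f).hasFDerivAt x).differentiableAt
    rw [h1, fderiv_clm_apply h2 (differentiableAt_const d)]
    simp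
  ext x
  rw [hd, hd]
  exact second_derivative_symmetric (fun y => f.hasFDerivAt y)
    ((SchwartzMap.fderivCLM ℝ E ℝ f).hasFDerivAt x) a b

theorem lineDerivWord_lineDerivOp (v : κ → E) (w : List κ) (a : E) (f : 𝓢(E, ℝ)) :
    lineDerivWord v w (∂_{a} f) = ∂_{a} (lineDerivWord v w f) := by
  induction w with
  | nil => rfl
  | cons i w ih => rw [lineDerivWord_cons, ih, lineDerivOp_comm, lineDerivWord_cons]

/-- The pointwise product of two real Schwartz functions. -/
noncomputable def schwartzMul (f g : 𝓢(E, ℝ)) : 𝓢(E, ℝ) :=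
  SchwartzMap.pairing (ContinuousLinearMap.mul ℝ ℝ) f g

@[simp]
theorem schwartzMul_apply (f g : 𝓢(E, ℝ)) (x : E) : schwartzMul f g x = f x * g x := rfl

theorem lineDerivOp_schwartzMul (f g : 𝓢(E, ℝ)) (a : E) :
    ∂_{a} (schwartzMul f g) = schwartzMul (∂_{a} f) g + schwartzMul f (∂_{a} g) := by
  ext x
  have h : HasFDerivAt (schwartzMul f g) (f x • fderiv ℝ g x + g x • fderiv ℝ f x) x :=
    (f.hasFDerivAt x).mul (g.hasFDerivAt x)
  rw [SchwartzMap.lineDerivOp_apply_eq_fderiv, h.fderiv]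
  simp only [add_apply, smul_apply, smul_eq_mul, schwartzMul_apply,
    SchwartzMap.lineDerivOp_apply_eq_fderiv]
  ring

/-- Operators on families `F` of Schwartz functions that are finite sums of products
`D^w F c * D^w' F d` with total order of differentiation `n`. -/
inductive IsQuadraticOfOrder (v : κ → E) : ℕ → ((ι → 𝓢(E, ℝ)) → 𝓢(E, ℝ)) → Prop
  | mul (w w' : List κ) (c d : ι) : IsQuadraticOfOrder v (w.length + w'.length)
      (fun F => schwartzMul (lineDerivWord v w (F c)) (lineDerivWord v w' (F d)))
  | add {n : ℕ} {Φ Ψ : (ι → 𝓢(E, ℝ)) → 𝓢(E, ℝ)} :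
      IsQuadraticOfOrder v n Φ → IsQuadraticOfOrder v n Ψ →
        IsQuadraticOfOrder v n (fun F => Φ F + Ψ F)

theorem IsQuadraticOfOrder.lineDerivOp {v : κ → E} {n : ℕ}
    {Φ : (ι → 𝓢(E, ℝ)) → 𝓢(E, ℝ)} (hΦ : IsQuadraticOfOrder v n Φ) (i : κ) :
    IsQuadraticOfOrder v (n + 1) (fun F => ∂_{v i} (Φ F)) := by
  induction hΦ with
  | mul w w' c d =>
    have h1 := IsQuadraticOfOrder.mul (v := v) (i :: w) w' c d
    have h2 := IsQuadraticOfOrder.mul (v := v) w (i :: w') c d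
    rw [List.length_cons, Nat.add_right_comm] at h1
    rw [List.length_cons, ← Nat.add_assoc] at h2
    simpa only [lineDerivOp_schwartzMul] using! h1.add h2
  | add _ _ h1 h2 => simpa only [LineDeriv.lineDerivOp_add] using! h1.add h2

/-- The Leibniz rule for a transport term: up to the leading term, `D^w (f * ∂_b g)` is a sum of
products of derivatives of first order derivatives of `f` and `g`. -/
theorem exists_isQuadraticOfOrder_commutator (v : κ → E) {V : Type*} (f g : V → 𝓢(E, ℝ))
    (F : V → ι → 𝓢(E, ℝ)) (cf cg : κ → ι) (hf : ∀ u i, F u (cf i) = ∂_{v i} (f u))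
    (hg : ∀ u i, F u (cg i) = ∂_{v i} (g u)) (b a : κ) (w : List κ) :
    ∃ Φ, IsQuadraticOfOrder v w.length Φ ∧ ∀ u,
      lineDerivWord v (a :: w) (schwartzMul (f u) (∂_{v b} (g u))) =
        schwartzMul (f u) (∂_{v b} (lineDerivWord v (a :: w) (g u))) + Φ (F u) := by
  induction w generalizing a with
  | nil =>
    refine ⟨_, IsQuadraticOfOrder.mul (v := v) [] [] (cf a) (cg b), fun u => ?_⟩
    simp only [lineDerivWord_cons, lineDerivWord_nil, lineDerivOp_schwartzMul, hf, hg]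
    rw [lineDerivOp_comm, add_comm]
  | cons i w ih =>
    obtain ⟨Φ, hΦ, h⟩ := ih i
    have h1 := IsQuadraticOfOrder.mul (v := v) [] (i :: w) (cf a) (cg b)
    rw [List.length_nil, zero_add] at h1
    refine ⟨_, h1.add (hΦ.lineDerivOp a), fun u => ?_⟩
    rw [lineDerivWord_cons, h, LineDeriv.lineDerivOp_add, lineDerivOp_schwartzMul,
      lineDerivWord_nil, hf, hg, lineDerivWord_lineDerivOp, lineDerivWord_cons v a,
      lineDerivOp_comm _ (v b)]
    abel

variable [FiniteDimensional ℝ E] [MeasurableSpace E] [BorelSpace E] {μ : Measure E}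
  [μ.IsAddHaarMeasure] [Finite κ] [Finite ι]

/-- Product estimate for derivatives of total order `n`, from interpolation. -/
theorem eLpNorm_lineDerivWord_mul_le (v : κ → E) (F : ι → 𝓢(E, ℝ)) {M N : ℝ≥0∞}
    {w w' : List κ} (hM : ∀ c, eLpNorm (F c) ⊤ μ ≤ M)
    (hN : ∀ c (z : List κ), z.length = w.length + w'.length →
      eLpNorm (lineDerivWord v z (F c)) 2 μ ≤ N) (c d : ι) :
    eLpNorm (schwartzMul (lineDerivWord v w (F c)) (lineDerivWord v w' (F d))) 2 μ ≤
      ENNReal.ofReal ((2 * (w.length + w'.length : ℕ) : ℝ) ^ (w.length * w'.length)) *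
        (M * N) := by
  have hcont : ∀ z e, AEStronglyMeasurable (lineDerivWord v z (F e)) μ := fun z e =>
    (lineDerivWord v z (F e)).continuous.aestronglyMeasurable
  rcases Nat.eq_zero_or_pos w.length with h0 | hw
  · have := List.length_eq_zero_iff.1 h0
    subst this
    simp only [List.length_nil, zero_mul, pow_zero, ENNReal.ofReal_one, one_mul]
    exact (eLpNorm_mul_le_of_inv_add_inv (hcont [] c) (hcont w' d) (p := ⊤) (q := 2)
      (by simp)).trans (mul_le_mul' (hM c) (hN d w' (by simp)))
  rcases Nat.eq_zero_or_pos w'.length with h0 | hw'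
  · have := List.length_eq_zero_iff.1 h0
    subst this
    simp only [List.length_nil, mul_zero, pow_zero, ENNReal.ofReal_one, one_mul]
    rw [mul_comm M]
    exact (eLpNorm_mul_le_of_inv_add_inv (hcont w c) (hcont [] d) (p := 2) (q := ⊤)
      (by simp)).trans (mul_le_mul' (hN c w (by simp)) (hM d))
  set n := w.length + w'.length with hn
  have hn2 : 2 ≤ n := by omega
  have hnpos : (0 : ℝ) < n := by positivity
  let p : ℕ → ℝ≥0∞ := fun j => (ENNReal.ofReal (j / (2 * n)))⁻¹
  let A : ℕ → ℝ≥0∞ := fun j => ⨆ (c : ι) (z : {z : List κ // z.length = j}),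
    eLpNorm (lineDerivWord v z (F c)) (p j) μ
  have leA : ∀ (z : List κ) e, eLpNorm (lineDerivWord v z (F e)) (p z.length) μ ≤ A z.length :=
    fun z e => le_iSup_of_le e (le_iSup_of_le ⟨z, rfl⟩ le_rfl)
  have hAt : ∀ j, A j ≠ ⊤ := fun j => by
    have : Finite {z : List κ // z.length = j} := List.finite_length_eq κ j
    exact iSup_ne_top_of_finite fun e => iSup_ne_top_of_finite fun z =>
      ((lineDerivWord v z.1 (F e)).eLpNorm_lt_top _ μ).ne
  have hA0 : A 0 ≤ M := by
    refine iSup_le fun e => iSup_le fun ⟨z, hz⟩ => ?_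
    have := List.length_eq_zero_iff.1 hz
    subst this
    simpa [p, lineDerivWord_nil] using hM e
  have hAn : A n ≤ N := by
    refine iSup_le fun e => iSup_le fun ⟨z, hz⟩ => ?_
    have : p n = 2 := by
      have : (n : ℝ) / (2 * n) = 2⁻¹ := by field_simp
      simp only [p, this]
      rw [ENNReal.ofReal_inv_of_pos two_pos]; simp
    rw [this]
    exact hN e z hz
  have hstep : ∀ j, j + 2 ≤ n →
      A (j + 1) ^ 2 ≤ ENNReal.ofReal (2 * n) * (A j * A (j + 2)) := fun j hj => by
    have hjn : (j : ℝ) + 2 ≤ n := by exact_mod_cast hj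
    have key : A (j + 1) ≤ (ENNReal.ofReal (2 * n) * (A j * A (j + 2))) ^ (2 : ℝ)⁻¹ := by
      refine iSup_le fun e => iSup_le fun ⟨z, hz⟩ => ?_
      rw [ENNReal.le_rpow_inv_iff two_pos, ENNReal.rpow_two]
      obtain ⟨i, z, rfl⟩ : ∃ i z', z = i :: z' := List.exists_cons_of_length_eq_add_one hz
      simp only [List.length_cons, add_left_inj] at hz
      subst hz
      have hq : 2 < 2 * (n : ℝ) / (z.length + 1) := by
        rw [lt_div_iff₀ (by positivity)]; linarith
      have hpq : p (z.length + 1) = ENNReal.ofReal (2 * (n : ℝ) / (z.length + 1)) := by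
        simp only [p]
        rw [← ENNReal.ofReal_inv_of_pos (by positivity)]
        congr 1; push_cast; rw [inv_div]
      have h := eLpNorm_lineDeriv_sq_le (μ := μ) (f := lineDerivWord v z (F e)) (v := v i) rfl rfl
        hq (p₁ := p z.length) (p₂ := p (z.length + 2)) (by
          simp only [p, inv_inv]
          rw [← ENNReal.ofReal_add (by positivity) (by positivity),
            ← ENNReal.ofReal_inv_of_pos (by positivity)]
          congr 1; push_cast; field_simp; ring)
      rw [hpq]
      refine h.trans (mul_le_mul' (ENNReal.ofReal_le_ofReal ?_) (mul_le_mul' (leA z e)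
        (leA (i :: i :: z) e)))
      have : 2 * (n : ℝ) / (z.length + 1) ≤ 2 * n :=
        div_le_self (by positivity) (by linarith [(Nat.cast_nonneg z.length : (0 : ℝ) ≤ _)])
      linarith
    rwa [ENNReal.le_rpow_inv_iff two_pos, ENNReal.rpow_two] at key
  have hC : (1 : ℝ) ≤ 2 * n := by
    have : (2 : ℝ) ≤ n := by exact_mod_cast hn2
    linarith
  have hreal := mul_le_pow_mul_of_sq_le (n := n) hC (A := fun j => (A j).toReal)
    (fun j => ENNReal.toReal_nonneg) (fun j hj => by
      have h := ENNReal.toReal_mono (by finiteness [hAt j, hAt (j + 2)]) (hstep j hj)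
      rwa [ENNReal.toReal_pow, ENNReal.toReal_mul, ENNReal.toReal_mul,
        ENNReal.toReal_ofReal (by positivity)] at h) hn.symm
  have hfin : A w.length * A w'.length ≤
      ENNReal.ofReal ((2 * (n : ℝ)) ^ (w.length * w'.length)) * (A 0 * A n) := by
    rw [← ENNReal.toReal_le_toReal (by finiteness [hAt w.length, hAt w'.length])
      (by finiteness [hAt 0, hAt n]), ENNReal.toReal_mul, ENNReal.toReal_mul, ENNReal.toReal_mul,
      ENNReal.toReal_ofReal (by positivity)]
    exact hreal
  calc _ ≤ eLpNorm (lineDerivWord v w (F c)) (p w.length) μ *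
        eLpNorm (lineDerivWord v w' (F d)) (p w'.length) μ :=
        eLpNorm_mul_le_of_inv_add_inv (hcont w c) (hcont w' d) (by
          simp only [p, inv_inv]
          rw [← ENNReal.ofReal_add (by positivity) (by positivity), ← add_div, ← Nat.cast_add, ← hn]
          have : (n : ℝ) / (2 * n) = 2⁻¹ := by field_simp
          rw [this, ENNReal.ofReal_inv_of_pos two_pos]; simp)
    _ ≤ A w.length * A w'.length := mul_le_mul' (leA w c) (leA w' d)
    _ ≤ _ := hfin
    _ ≤ _ := by gcongr

theorem IsQuadraticOfOrder.exists_eLpNorm_le {v : κ → E} {n : ℕ}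
    {Φ : (ι → 𝓢(E, ℝ)) → 𝓢(E, ℝ)} (hΦ : IsQuadraticOfOrder v n Φ) (μ : Measure E)
    [μ.IsAddHaarMeasure] :
    ∃ K : ℝ, 0 ≤ K ∧ ∀ (F : ι → 𝓢(E, ℝ)) (M N : ℝ≥0∞), (∀ c, eLpNorm (F c) ⊤ μ ≤ M) →
      (∀ c (z : List κ), z.length = n → eLpNorm (lineDerivWord v z (F c)) 2 μ ≤ N) →
        eLpNorm (Φ F) 2 μ ≤ ENNReal.ofReal K * (M * N) := by
  induction hΦ with
  | mul w w' c d =>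
    exact ⟨_, by positivity, fun F M N hM hN => eLpNorm_lineDerivWord_mul_le v F hM hN c d⟩
  | @add n Φ Ψ _ _ h1 h2 =>
    obtain ⟨K₁, hK₁, h1⟩ := h1
    obtain ⟨K₂, hK₂, h2⟩ := h2
    refine ⟨K₁ + K₂, by positivity, fun F M N hM hN => ?_⟩
    rw [ENNReal.ofReal_add hK₁ hK₂, add_mul]
    exact (eLpNorm_add_le (Φ F).continuous.aestronglyMeasurable
      (Ψ F).continuous.aestronglyMeasurable (by norm_num)).trans
      (add_le_add (h1 F M N hM hN) (h2 F M N hM hN))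

end Words

section Transport

theorem integrable_mul_schwartz {E : Type*} [NormedAddCommGroup E] [NormedSpace ℝ E]
    [FiniteDimensional ℝ E] [MeasurableSpace E] [BorelSpace E] {μ : Measure E}
    [μ.HasTemperateGrowth] (f g : 𝓢(E, ℝ)) : Integrable (fun x => f x * g x) μ :=
  (schwartzMul f g).integrable

/-- The integral pairing of Schwartz functions is bounded by the product of `L²` norms. -/
theorem abs_integral_mul_le {E : Type*} [NormedAddCommGroup E] [NormedSpace ℝ E]
    [FiniteDimensional ℝ E] [MeasurableSpace E] [BorelSpace E] {μ : Measure E}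
    (f g : 𝓢(E, ℝ)) {A B : ℝ} (hA : 0 ≤ A) (hB : 0 ≤ B)
    (hf : eLpNorm f 2 μ ≤ ENNReal.ofReal A) (hg : eLpNorm g 2 μ ≤ ENNReal.ofReal B) :
    |∫ x, f x * g x ∂μ| ≤ A * B := by
  rw [← ENNReal.ofReal_le_ofReal_iff (mul_nonneg hA hB), ENNReal.ofReal_mul hA,
    ← Real.enorm_eq_ofReal_abs]
  calc _ ≤ ∫⁻ x, ‖f x * g x‖ₑ ∂μ := enorm_integral_le_lintegral_enorm _
    _ = eLpNorm (fun x => f x * g x) 1 μ := eLpNorm_one_eq_lintegral_enorm.symm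
    _ ≤ eLpNorm f 2 μ * eLpNorm g 2 μ :=
        eLpNorm_mul_le_of_inv_add_inv f.continuous.aestronglyMeasurable
          g.continuous.aestronglyMeasurable (by simp [ENNReal.inv_two_add_inv_two])
    _ ≤ _ := mul_le_mul' hf hg

theorem lineDerivWord_add {E κ : Type*} [NormedAddCommGroup E] [NormedSpace ℝ E] (v : κ → E)
    (w : List κ) (f g : 𝓢(E, ℝ)) :
    lineDerivWord v w (f + g) = lineDerivWord v w f + lineDerivWord v w g := by
  induction w with
  | nil => rfl
  | cons i w ih => simp only [lineDerivWord_cons, ih, LineDeriv.lineDerivOp_add]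

/-- Transport by a divergence-free Schwartz vector field is skew-symmetric. -/
theorem integral_transport_mul_self {E κ : Type*} [NormedAddCommGroup E] [NormedSpace ℝ E]
    [FiniteDimensional ℝ E] [MeasurableSpace E] [BorelSpace E] (μ : Measure E)
    [μ.IsAddHaarMeasure] [Fintype κ] (e : κ → E) (b : κ → 𝓢(E, ℝ))
    (hdiv : ∀ x, ∑ j, ∂_{e j} (b j) x = 0) (f : 𝓢(E, ℝ)) :
    ∫ x, (∑ j, b j x * ∂_{e j} f x) * f x ∂μ = 0 := by
  have h : ∀ j, ∫ x, b j x * ∂_{e j} f x * f x ∂μ =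
      -(1 / 2) * ∫ x, ∂_{e j} (b j) x * schwartzMul f f x ∂μ := fun j => by
    have h1 := SchwartzMap.integral_mul_lineDerivOp_right_eq_neg_left (μ := μ) (b j)
      (schwartzMul f f) (e j)
    rw [neg_mul, ← mul_neg, ← h1, ← integral_const_mul]
    refine integral_congr_ae (Filter.Eventually.of_forall fun x => ?_)
    simp only [lineDerivOp_schwartzMul, add_apply, schwartzMul_apply]
    ring
  simp_rw [Finset.sum_mul]
  have hint : ∀ j, Integrable (fun x => b j x * ∂_{e j} f x * f x) μ := fun j =>
    integrable_mul_schwartz (schwartzMul (b j) (∂_{e j} f)) f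
  rw [integral_finsetSum _ fun j _ => hint j]
  simp_rw [h]
  rw [← Finset.mul_sum, ← integral_finsetSum _ fun j _ =>
    integrable_mul_schwartz (∂_{e j} (b j)) (schwartzMul f f)]
  simp_rw [← Finset.sum_mul, hdiv]
  simp

/-- The standard basis directions of `ℝ³`. -/
noncomputable def stdDir (i : Fin 3) : Fin 3 → ℝ := Pi.single i 1

/-- The components of a Schwartz vector field. -/
noncomputable def schwartzComponent (u : 𝓢(Fin 3 → ℝ, Fin 3 → ℝ)) (i : Fin 3) :
    𝓢(Fin 3 → ℝ, ℝ) :=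
  SchwartzMap.postcompCLM (ContinuousLinearMap.proj (R := ℝ) (φ := fun _ : Fin 3 => ℝ) i) u

theorem coe_schwartzComponent (u : 𝓢(Fin 3 → ℝ, Fin 3 → ℝ)) (i : Fin 3) :
    ⇑(schwartzComponent u i) = fun y => u y i := rfl

theorem pd_coe (i : Fin 3) (f : 𝓢(Fin 3 → ℝ, ℝ)) :
    pd i f = (∂_{stdDir i} f : 𝓢(Fin 3 → ℝ, ℝ)) :=
  funext fun x => (SchwartzMap.lineDerivOp_apply_eq_fderiv (stdDir i) f x).symm

theorem pd_iterate_coe (i : Fin 3) (n : ℕ) (f : 𝓢(Fin 3 → ℝ, ℝ)) :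
    (pd i)^[n] f = lineDerivWord stdDir (List.replicate n i) f := by
  induction n with
  | zero => rfl
  | succ n ih => rw [Function.iterate_succ_apply', ih, pd_coe]; rfl

/-- The word listing the directions of the multi-index `(a, b, c)`. -/
def multiIndexWord (a b c : ℕ) : List (Fin 3) :=
  List.replicate a 0 ++ (List.replicate b 1 ++ List.replicate c 2)

theorem length_multiIndexWord (a b c : ℕ) : (multiIndexWord a b c).length = a + b + c := by
  simp [multiIndexWord, add_assoc]

theorem Dmulti_coe (a b c : ℕ) (f : 𝓢(Fin 3 → ℝ, ℝ)) :
    Dmulti a b c f = lineDerivWord stdDir (multiIndexWord a b c) f := by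
  rw [Dmulti, pd_iterate_coe, pd_iterate_coe, pd_iterate_coe]
  simp only [lineDerivWord, multiIndexWord, List.foldr_append]

/-- The entries `∂_a u_b` of the gradient of a Schwartz vector field. -/
noncomputable def schwartzGrad (u : 𝓢(Fin 3 → ℝ, Fin 3 → ℝ)) (c : Fin 3 × Fin 3) :
    𝓢(Fin 3 → ℝ, ℝ) :=
  ∂_{stdDir c.1} (schwartzComponent u c.2)

theorem gradLinfVec_nonneg (u : (Fin 3 → ℝ) → (Fin 3 → ℝ)) : 0 ≤ gradLinfVec u :=
  ENNReal.toReal_nonneg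

theorem norm_stdDir (i : Fin 3) : ‖stdDir i‖ = 1 := by
  rw [stdDir, Pi.norm_single, norm_one]

theorem eLpNorm_schwartzGrad_top_le (u : 𝓢(Fin 3 → ℝ, Fin 3 → ℝ)) (c : Fin 3 × Fin 3) :
    eLpNorm (schwartzGrad u c) ⊤ volume ≤ ENNReal.ofReal (gradLinfVec fun y => u y) := by
  have hfin : eLpNorm (fun x => ‖fderiv ℝ u x‖) ⊤ volume ≠ ⊤ := by
    rw [eLpNorm_norm]
    exact ((SchwartzMap.fderivCLM ℝ (Fin 3 → ℝ) (Fin 3 → ℝ) u).eLpNorm_lt_top ⊤ volume).ne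
  rw [gradLinfVec, ENNReal.ofReal_toReal hfin]
  refine eLpNorm_mono fun x => ?_
  have h : HasFDerivAt (schwartzComponent u c.2)
      ((ContinuousLinearMap.proj (R := ℝ) (φ := fun _ : Fin 3 => ℝ) c.2).comp (fderiv ℝ u x)) x :=
    (ContinuousLinearMap.hasFDerivAt _).comp x (u.hasFDerivAt x)
  rw [schwartzGrad, SchwartzMap.lineDerivOp_apply_eq_fderiv, h.fderiv, norm_norm]
  refine (norm_le_pi_norm (fderiv ℝ u x (stdDir c.1)) c.2).trans ?_
  simpa [norm_stdDir] using (fderiv ℝ u x).le_opNorm (stdDir c.1)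

theorem integral_lineDerivWord_sq_le_sobSq (f : 𝓢(Fin 3 → ℝ, ℝ)) (w : List (Fin 3)) {m : ℕ}
    (hw : w.length ≤ m) :
    ∫ x, ‖lineDerivWord stdDir w f x‖ ^ 2 ≤ sobSq m f := by
  have hint : Integrable (fun x => ‖iteratedFDeriv ℝ w.length f x‖ ^ 2) := by
    obtain ⟨C, _, hC⟩ := f.decay 0 w.length
    have h := f.integrable_pow_mul_iteratedFDeriv volume 0 w.length
    simp only [pow_zero, one_mul] at h hC
    simp_rw [sq]
    exact h.mul_bdd h.aestronglyMeasurable (c := C)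
      (Filter.Eventually.of_forall fun x => by rw [norm_norm]; exact hC x)
  calc _ ≤ ∫ x, ‖iteratedFDeriv ℝ w.length f x‖ ^ 2 := by
        refine integral_mono_of_nonneg (Filter.Eventually.of_forall fun x => by positivity) hint
          (Filter.Eventually.of_forall fun x => ?_)
        simp only
        gcongr
        rw [lineDerivWord_apply]
        refine (ContinuousMultilinearMap.le_opNorm _ _).trans ?_
        simp [norm_stdDir]
    _ ≤ _ := Finset.single_le_sum
        (f := fun k => ∫ x : Fin 3 → ℝ, ‖iteratedFDeriv ℝ k f x‖ ^ 2)
        (fun k _ => integral_nonneg fun x => by positivity)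
        (Finset.mem_range.2 (Nat.lt_succ_of_le hw))

theorem sobSq_nonneg (m : ℕ) (f : (Fin 3 → ℝ) → ℝ) : 0 ≤ sobSq m f :=
  Finset.sum_nonneg fun _ _ => integral_nonneg fun _ => by positivity

theorem eLpNorm_lineDerivWord_schwartzGrad_le (u : 𝓢(Fin 3 → ℝ, Fin 3 → ℝ)) (c : Fin 3 × Fin 3)
    (w : List (Fin 3)) {m : ℕ} (hw : w.length ≤ m - 1) :
    eLpNorm (lineDerivWord stdDir w (schwartzGrad u c)) 2 volume ≤
      ENNReal.ofReal (gradSob m fun y => u y) := by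
  rw [MemLp.eLpNorm_eq_integral_rpow_norm two_ne_zero ENNReal.ofNat_ne_top
    (SchwartzMap.memLp _ 2 volume)]
  refine ENNReal.ofReal_le_ofReal ?_
  simp only [ENNReal.toReal_ofNat, Real.rpow_two]
  rw [← one_div, ← Real.sqrt_eq_rpow]
  refine Real.sqrt_le_sqrt ((integral_lineDerivWord_sq_le_sobSq _ w hw).trans ?_)
  have h : sobSq (m - 1) (schwartzGrad u c) = sobSq (m - 1) (pd c.1 fun y => u y c.2) := by
    rw [schwartzGrad, ← pd_coe, coe_schwartzComponent]
  rw [h]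
  exact (Finset.single_le_sum (f := fun j => sobSq (m - 1) (pd j fun y => u y c.2))
    (fun j _ => sobSq_nonneg _ _) (Finset.mem_univ c.1)).trans
    (Finset.single_le_sum (f := fun i => ∑ j, sobSq (m - 1) (pd j fun y => u y i))
      (fun i _ => Finset.sum_nonneg fun j _ => sobSq_nonneg _ _) (Finset.mem_univ c.2))

/-- The transport term `(u · ∇) u_i`. -/
noncomputable def schwartzTransport (u : 𝓢(Fin 3 → ℝ, Fin 3 → ℝ)) (i : Fin 3) :
    𝓢(Fin 3 → ℝ, ℝ) :=
  ∑ j, schwartzMul (schwartzComponent u j) (∂_{stdDir j} (schwartzComponent u i))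

theorem coe_schwartzTransport (u : 𝓢(Fin 3 → ℝ, Fin 3 → ℝ)) (i : Fin 3) :
    ⇑(schwartzTransport u i) = fun y => ∑ j, u y j * pd j (fun z => u z i) y := by
  ext y
  simp only [schwartzTransport, sum_apply, schwartzMul_apply, ← coe_schwartzComponent,
    pd_coe]
  rfl

/-- The commutator of `D^w` with transport is quadratic in the gradient. -/
theorem exists_isQuadraticOfOrder_transport (a : Fin 3) (w : List (Fin 3)) (i : Fin 3) :
    ∃ Φ : (Fin 3 × Fin 3 → 𝓢(Fin 3 → ℝ, ℝ)) → 𝓢(Fin 3 → ℝ, ℝ),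
      IsQuadraticOfOrder stdDir w.length Φ ∧ ∀ u x,
        lineDerivWord stdDir (a :: w) (schwartzTransport u i) x =
          ∑ j, schwartzComponent u j x *
            ∂_{stdDir j} (lineDerivWord stdDir (a :: w) (schwartzComponent u i)) x +
          Φ (schwartzGrad u) x := by
  choose Φ hΦ h using fun j => exists_isQuadraticOfOrder_commutator stdDir
    (fun u => schwartzComponent u j) (fun u => schwartzComponent u i) schwartzGrad
    (fun k => (k, j)) (fun k => (k, i)) (fun _ _ => rfl) (fun _ _ => rfl) j a w
  refine ⟨_, ((hΦ 0).add (hΦ 1)).add (hΦ 2), fun u x => ?_⟩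
  rw [schwartzTransport, Fin.sum_univ_three, Fin.sum_univ_three, lineDerivWord_add,
    lineDerivWord_add, h, h, h]
  simp only [add_apply, schwartzMul_apply]
  ring

theorem exists_abs_integral_transport_le {m : ℕ} (a : Fin 3) (w : List (Fin 3))
    (hw : w.length ≤ m - 1) (i : Fin 3) :
    ∃ K : ℝ, 0 ≤ K ∧ ∀ u : 𝓢(Fin 3 → ℝ, Fin 3 → ℝ),
      (∀ x, ∑ j, ∂_{stdDir j} (schwartzComponent u j) x = 0) →
      |∫ x, lineDerivWord stdDir (a :: w) (schwartzTransport u i) x *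
          lineDerivWord stdDir (a :: w) (schwartzComponent u i) x| ≤
        K * gradLinfVec (fun y => u y) * gradSob m (fun y => u y) ^ 2 := by
  obtain ⟨Φ, hΦ, h⟩ := exists_isQuadraticOfOrder_transport a w i
  obtain ⟨K, hK, hb⟩ := hΦ.exists_eLpNorm_le volume
  refine ⟨K, hK, fun u hdiv => ?_⟩
  set f := lineDerivWord stdDir (a :: w) (schwartzComponent u i) with hf
  have hN0 : 0 ≤ gradSob m fun y => u y := Real.sqrt_nonneg _
  have hM0 := gradLinfVec_nonneg fun y => u y
  have h0 := integral_transport_mul_self volume stdDir (schwartzComponent u) hdiv f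
  have hsplit : ∫ x, lineDerivWord stdDir (a :: w) (schwartzTransport u i) x * f x =
      ∫ x, Φ (schwartzGrad u) x * f x := by
    rw [← sub_eq_zero, ← integral_sub
      (integrable_mul_schwartz _ _) (integrable_mul_schwartz _ _), ← h0]
    refine integral_congr_ae (Filter.Eventually.of_forall fun x => ?_)
    simp only [h, ← hf]
    ring
  have hR : eLpNorm (Φ (schwartzGrad u)) 2 volume ≤
      ENNReal.ofReal (K * (gradLinfVec (fun y => u y) * gradSob m fun y => u y)) := by
    rw [ENNReal.ofReal_mul hK, ENNReal.ofReal_mul hM0]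
    exact hb _ _ _ (eLpNorm_schwartzGrad_top_le u) fun c z hz =>
      eLpNorm_lineDerivWord_schwartzGrad_le u c z (hz ▸ hw)
  have hfb : eLpNorm f 2 volume ≤ ENNReal.ofReal (gradSob m fun y => u y) := by
    have : f = lineDerivWord stdDir w (schwartzGrad u (a, i)) := by
      rw [schwartzGrad, lineDerivWord_lineDerivOp, hf, lineDerivWord_cons]
    rw [this]
    exact eLpNorm_lineDerivWord_schwartzGrad_le u _ w hw
  rw [hsplit]
  refine (abs_integral_mul_le _ _ (by positivity) hN0 hR hfb).trans (le_of_eq ?_)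
  ring

theorem exists_abs_integral_multiIndex_le {m : ℕ} (p : ℕ × ℕ × ℕ) (hp : p ∈ idxSetPos m) :
    ∃ K : ℝ, 0 ≤ K ∧ ∀ u : 𝓢(Fin 3 → ℝ, Fin 3 → ℝ),
      (∀ x, ∑ j, ∂_{stdDir j} (schwartzComponent u j) x = 0) →
      |∫ x, ∑ i, lineDerivWord stdDir (multiIndexWord p.1 p.2.1 p.2.2) (schwartzTransport u i) x *
          lineDerivWord stdDir (multiIndexWord p.1 p.2.1 p.2.2) (schwartzComponent u i) x| ≤
        K * gradLinfVec (fun y => u y) * gradSob m (fun y => u y) ^ 2 := by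
  obtain ⟨hpos, hle⟩ := (Finset.mem_filter.1 hp).2
  rw [← length_multiIndexWord] at hpos hle
  obtain ⟨a, w, hw⟩ := List.exists_cons_of_length_pos hpos
  rw [hw] at hle ⊢
  rw [List.length_cons] at hle
  choose K hK h using exists_abs_integral_transport_le (m := m) a w (by omega)
  refine ⟨∑ i, K i, Finset.sum_nonneg fun i _ => hK i, fun u hdiv => ?_⟩
  rw [integral_finsetSum _ fun i _ => integrable_mul_schwartz _ _, Finset.sum_mul,
    Finset.sum_mul]
  exact (Finset.abs_sum_le_sum_abs _ _).trans (Finset.sum_le_sum fun i _ => h i u hdiv)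

end Transport

/-- Transport term cancellation and commutator estimate: for Schwartz divergence-free `u`,
`∫ (u·∇ D^α u)·D^α u = 0` for every `|α| ≤ m`, and consequently
`|Σ_{0<|α|≤m} ∫ D^α(u·∇u)·D^α u| ≤ C ‖∇u‖_{L^∞} ‖∇u‖²_{H^{m−1}}`. -/
theorem transport_cancellation_and_commutator (m : ℕ) (hm : 3 ≤ m) :
    ∃ C > 0, ∀ u : SchwartzMap (Fin 3 → ℝ) (Fin 3 → ℝ),
      (∀ x, ∑ i, pd i (fun y => u y i) x = 0) →
      (∀ a b c : ℕ, a + b + c ≤ m →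
        (∫ x : Fin 3 → ℝ, ∑ i,
          (∑ j, u x j * pd j (Dmulti a b c (fun y => u y i)) x)
            * Dmulti a b c (fun y => u y i) x) = 0) ∧
      |∑ p ∈ idxSetPos m,
          ∫ x : Fin 3 → ℝ, ∑ i,
            Dmulti p.1 p.2.1 p.2.2
              (fun y => ∑ j, u y j * pd j (fun z => u z i) y) x
              * Dmulti p.1 p.2.1 p.2.2 (fun y => u y i) x| ≤
        C * gradLinfVec (fun y => u y) * gradSob m (fun y => u y) ^ 2 := by
  choose K hK h using exists_abs_integral_multiIndex_le (m := m)
  have hsum : 0 ≤ ∑ p ∈ (idxSetPos m).attach, K p.1 p.2 := Finset.sum_nonneg fun p _ => hK p.1 p.2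
  refine ⟨∑ p ∈ (idxSetPos m).attach, K p.1 p.2 + 1, by linarith, fun u hdiv => ?_⟩
  simp only [← coe_schwartzComponent, pd_coe] at hdiv
  constructor
  · intro a b c _
    simp only [← coe_schwartzComponent, pd_coe, Dmulti_coe]
    set f := fun i => lineDerivWord stdDir (multiIndexWord a b c) (schwartzComponent u i) with hf
    have hint : ∀ i, Integrable
        (fun x => (∑ j, u x j * ∂_{stdDir j} (f i) x) * f i x) := fun i => by
      refine (schwartzMul (∑ j, schwartzMul (schwartzComponent u j)
        (∂_{stdDir j} (f i))) (f i)).integrable.congr (Filter.Eventually.of_forall fun x => ?_)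
      simp only [schwartzMul_apply, sum_apply]
      rfl
    rw [integral_finsetSum _ fun i _ => hint i]
    exact Finset.sum_eq_zero fun i _ =>
      integral_transport_mul_self volume stdDir (schwartzComponent u) hdiv (f i)
  · have hM0 := gradLinfVec_nonneg fun y => u y
    simp only [← coe_schwartzTransport]
    simp only [← coe_schwartzComponent, Dmulti_coe]
    rw [← Finset.sum_attach]
    calc _ ≤ ∑ p ∈ (idxSetPos m).attach,
          K p.1 p.2 * gradLinfVec (fun y => u y) * gradSob m (fun y => u y) ^ 2 :=
          (Finset.abs_sum_le_sum_abs _ _).trans (Finset.sum_le_sum fun p _ => h p.1 p.2 u hdiv)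
      _ = (∑ p ∈ (idxSetPos m).attach, K p.1 p.2) * gradLinfVec (fun y => u y) *
          gradSob m (fun y => u y) ^ 2 := by rw [Finset.sum_mul, Finset.sum_mul]
      _ ≤ _ := by gcongr; linarith
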